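/- Let k be an algebraically closed field and r ≥ 2 an integer. The Zariski closed set {(F_1,F_2) ∈ W_{r,2} × W_{r,2} : dim V(F_1,F_2) ≥ r−1} has exactly two irreducible components: the set A of pairs of quadratic forms sharing a common nonzero linear factor, and the set B of pairs of quadratic forms that are linearly dependent over k. -/

import Mathlib

open MvPolynomial

noncomputable section

variable (K : Type*) [Field K] (M : Type*) [AddCommGroup M] [Module K M]

/-- Evaluation of a polynomial in the linear functionals of `M` at a point `v : M`.
These are precisely the polynomial functions on the affine space `M`. -/
def polyEval (p : MvPolynomial (M →ₗ[K] K) K) (v : M) : K :=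
  MvPolynomial.eval (fun φ : M →ₗ[K] K => φ v) p

lemma polyEval_mul (p q : MvPolynomial (M →ₗ[K] K) K) (v : M) :
    polyEval K M (p * q) v = polyEval K M p v * polyEval K M q v :=
  map_mul (MvPolynomial.eval fun φ : M →ₗ[K] K => φ v) p q

/-- The collection of Zariski-closed subsets of the affine space `M`:
common zero loci of families of polynomial functions. -/
def zariskiCloseds : Set (Set M) :=
  {s | ∃ S : Set (MvPolynomial (M →ₗ[K] K) K), s = {v | ∀ p ∈ S, polyEval K M p v = 0}}

/-- The Zariski topology on an affine space (vector space) `M` over `K`. -/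
def zariskiTopology : TopologicalSpace M := by
  refine TopologicalSpace.ofClosed (zariskiCloseds K M) ⟨{1}, ?_⟩ ?_ ?_
  · ext v
    simp [polyEval]
  · intro A hA
    choose S hS using fun a : A => hA a.2
    refine ⟨⋃ a : A, S a, ?_⟩
    ext v
    simp only [Set.mem_sInter, Set.mem_setOf_eq, Set.mem_iUnion]
    constructor
    · rintro h p ⟨a, hp⟩
      have := h a a.2
      rw [hS a] at this
      exact this p hp
    · intro h t ht
      have : v ∈ {w | ∀ p ∈ S ⟨t, ht⟩, polyEval K M p w = 0} :=
        fun p hp => h p ⟨⟨t, ht⟩, hp⟩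
      rw [← hS ⟨t, ht⟩] at this
      exact this
  · rintro s ⟨S₁, rfl⟩ t ⟨S₂, rfl⟩
    refine ⟨Set.image2 (· * ·) S₁ S₂, ?_⟩
    ext v
    simp only [Set.mem_union, Set.mem_setOf_eq]
    constructor
    · rintro (h | h) p ⟨p₁, h₁, p₂, h₂, rfl⟩
      · show polyEval K M (p₁ * p₂) v = 0
        rw [polyEval_mul, h p₁ h₁, zero_mul]
      · show polyEval K M (p₁ * p₂) v = 0
        rw [polyEval_mul, h p₂ h₂, mul_zero]
    · intro h
      by_contra hc
      push_neg at hc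
      obtain ⟨⟨p₁, h₁, hv₁⟩, ⟨p₂, h₂, hv₂⟩⟩ := hc
      have h12 := h (p₁ * p₂) ⟨p₁, h₁, p₂, h₂, rfl⟩
      rw [polyEval_mul] at h12
      exact mul_ne_zero hv₁ hv₂ h12

/-- The dimension of a subset of affine space: the Krull dimension of its Zariski closure. -/
def dimSet {M : Type*} [TopologicalSpace M] (s : Set M) : WithBot ℕ∞ :=
  topologicalKrullDim ↥(closure s)

/-- `vdimGE r n F m` says that the common projective vanishing locus
`V(F 0, …, F (n-1)) ⊆ ℙ^r` has dimension at least `m` (with `dim ∅ = -∞`).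
This is encoded via the Krull dimension of the homogeneous coordinate ring of the
affine cone: `dim V(F) ≥ m` iff the cone has Krull dimension at least `max m 0 + 1`. -/
def vdimGE {K : Type*} [Field K] (r n : ℕ) (F : Fin n → MvPolynomial (Fin (r + 1)) K)
    (m : ℤ) : Prop :=
  ((m.toNat + 1 : ℕ) : WithBot ℕ∞) ≤
    ringKrullDim (MvPolynomial (Fin (r + 1)) K ⧸ Ideal.span (Set.range F))

end

noncomputable section Statement14

open MvPolynomial

variable (K : Type*) [Field K]

/-- The affine space `W_{r,2} × W_{r,2}` of pairs of quadratic forms in `x_0, …, x_r`. -/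
abbrev pairSpace (r : ℕ) : Type _ :=
  ↥(homogeneousSubmodule (Fin (r + 1)) K 2) × ↥(homogeneousSubmodule (Fin (r + 1)) K 2)

/-- The Zariski topology on the affine space of pairs of quadratic forms. -/
instance (r : ℕ) : TopologicalSpace (pairSpace K r) := zariskiTopology K _


section Aux14

/-- Regular functions on the affine space `M`. -/
def regFun (K : Type*) [Field K] (M : Type*) [AddCommGroup M] [Module K M] :
    Subalgebra K (M → K) where
  carrier := {f | ∃ p : MvPolynomial (M →ₗ[K] K) K, ∀ v, f v = polyEval K M p v}
  mul_mem' := by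
    rintro f g ⟨p, hp⟩ ⟨q, hq⟩
    exact ⟨p * q, fun v => by simp [hp, hq, polyEval]⟩
  add_mem' := by
    rintro f g ⟨p, hp⟩ ⟨q, hq⟩
    exact ⟨p + q, fun v => by simp [hp, hq, polyEval]⟩
  algebraMap_mem' := by
    intro c
    exact ⟨C c, fun v => by simp [polyEval]⟩

lemma regFun_linear {K : Type*} [Field K] {M : Type*} [AddCommGroup M] [Module K M]
    (φ : M →ₗ[K] K) : (fun v => φ v) ∈ regFun K M :=
  ⟨X φ, fun v => by simp [polyEval]⟩

lemma zariski_isClosed_iff {K : Type*} [Field K] {M : Type*} [AddCommGroup M] [Module K M]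
    (s : Set M) : @IsClosed M (zariskiTopology K M) s ↔ s ∈ zariskiCloseds K M := by
  rw [← @isOpen_compl_iff M s (zariskiTopology K M)]
  change sᶜᶜ ∈ _ ↔ _
  rw [compl_compl]

lemma isClosed_regFun {K : Type*} [Field K] {M : Type*} [AddCommGroup M] [Module K M]
    {ι : Type*} (f : ι → M → K) (hf : ∀ i, f i ∈ regFun K M) :
    @IsClosed M (zariskiTopology K M) {v | ∀ i, f i v = 0} := by
  choose p hp using hf
  rw [zariski_isClosed_iff]
  refine ⟨Set.range p, ?_⟩
  ext v
  simp [hp]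

lemma isPreirreducible_of_curves {K : Type*} [Field K] [Infinite K]
    {M : Type*} [AddCommGroup M] [Module K M] (S : Set M)
    (h : ∀ x ∈ S, ∀ y ∈ S, ∃ γ : K → M, γ 0 = x ∧ γ 1 = y ∧ (∀ t, γ t ∈ S) ∧
      ∀ φ : M →ₗ[K] K, ∃ p : Polynomial K, ∀ t, φ (γ t) = p.eval t) :
    @IsPreirreducible M (zariskiTopology K M) S := by
  let _ : TopologicalSpace M := zariskiTopology K M
  have key : ∀ U : Set M, IsOpen U → ∀ x ∈ U, ∃ p : MvPolynomial (M →ₗ[K] K) K,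
      polyEval K M p x ≠ 0 ∧ ∀ y, polyEval K M p y ≠ 0 → y ∈ U := by
    intro U hU x hx
    have hc : IsClosed Uᶜ := hU.isClosed_compl
    have hc' : Uᶜ ∈ zariskiCloseds K M := (zariski_isClosed_iff _).mp hc
    obtain ⟨S, hS⟩ := hc'
    have hx' : x ∉ Uᶜ := fun h => h hx
    rw [hS] at hx'
    simp only [Set.mem_ofPred_eq, not_forall] at hx'
    obtain ⟨p, hp, hpx⟩ := hx'
    refine ⟨p, hpx, fun y hy => ?_⟩
    by_contra hyU
    have : y ∈ Uᶜ := hyU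
    rw [hS] at this
    exact hy (this p hp)
  intro U V hU hV ⟨x, hxS, hxU⟩ ⟨y, hyS, hyV⟩
  obtain ⟨p, hpx, hpU⟩ := key U hU x hxU
  obtain ⟨q, hqy, hqV⟩ := key V hV y hyV
  obtain ⟨γ, h0, h1, hγS, hγ⟩ := h x hxS y hyS
  choose g hg using hγ
  have comp : ∀ p : MvPolynomial (M →ₗ[K] K) K, ∃ P : Polynomial K, ∀ t,
      polyEval K M p (γ t) = P.eval t := by
    intro p
    refine ⟨MvPolynomial.aeval g p, fun t => ?_⟩
    have : (fun φ : M →ₗ[K] K => φ (γ t)) = fun φ => (g φ).eval t := by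
      funext φ; exact hg φ t
    unfold polyEval
    rw [this]
    induction p using MvPolynomial.induction_on with
    | C a => simp
    | add p q hp hq => simp [hp, hq]
    | mul_X p i hp => simp [hp]
  obtain ⟨P, hP⟩ := comp p
  obtain ⟨Q, hQ⟩ := comp q
  have hP0 : P ≠ 0 := by
    rintro rfl
    apply hpx
    rw [← h0, hP]; simp
  have hQ0 : Q ≠ 0 := by
    rintro rfl
    apply hqy
    rw [← h1, hQ]; simp
  have hPQ := mul_ne_zero hP0 hQ0
  obtain ⟨t, ht⟩ : ∃ t, (P * Q).eval t ≠ 0 := by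
    by_contra hcon
    push Not at hcon
    exact hPQ (Polynomial.funext (fun t => by simpa using hcon t))
  rw [Polynomial.eval_mul] at ht
  refine ⟨γ t, hγS t, hpU _ ?_, hqV _ ?_⟩
  · rw [hP]; exact left_ne_zero_of_mul ht
  · rw [hQ]; exact right_ne_zero_of_mul ht

/-- The half-discriminant. -/
def halfDisc {K : Type*} [Field K] (a b c f g h : K) : K :=
  4 * a * b * c + f * g * h - a * f ^ 2 - b * g ^ 2 - c * h ^ 2

lemma quad_classify {K : Type*} [Field K] [IsAlgClosed K] {V : Type*} [AddCommGroup V] [Module K V]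
    (b : V →ₗ[K] V →ₗ[K] K)
    (h : ∀ u v w, halfDisc (b u u) (b v v) (b w w) (b v w + b w v) (b u w + b w u)
      (b u v + b v u) = 0) :
    ∃ l m : V →ₗ[K] K, ∀ x, b x x = l x * m x := by
  by_cases h1 : ∃ u v, b u u = 0 ∧ b v v = 0 ∧ b u v + b v u ≠ 0
  · obtain ⟨u, v, hu, hv, huv⟩ := h1
    refine ⟨b u + b.flip u, (b u v + b v u)⁻¹ • (b v + b.flip v), fun x => ?_⟩
    have := h u v x
    simp only [halfDisc, hu, hv] at this
    simp only [LinearMap.add_apply, LinearMap.flip_apply, LinearMap.smul_apply, smul_eq_mul]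
    field_simp
    apply mul_left_cancel₀ huv
    linear_combination -this
  · push Not at h1
    have h2 : ∀ u v, (b u v + b v u) ^ 2 = 4 * b u u * b v v := by
      intro u v
      by_contra hne
      by_cases ha : b u u = 0
      · have hh : b u v + b v u ≠ 0 := by
          intro h0; apply hne; rw [h0, ha]; ring
        apply hh
        have := h1 u (v + (-(b v v) / (b u v + b v u)) • u) ha (by
          simp only [map_add, LinearMap.add_apply, map_smul, LinearMap.smul_apply, smul_eq_mul, ha]
          field_simp
          ring)
        simpa [ha] using this
      · obtain ⟨t, ht⟩ : ∃ t : K, b u u * t ^ 2 + (b u v + b v u) * t + b v v = 0 := by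
          obtain ⟨t, ht⟩ := IsAlgClosed.exists_root (Polynomial.C (b u u) * Polynomial.X ^ 2 +
            Polynomial.C (b u v + b v u) * Polynomial.X + Polynomial.C (b v v)) (by
              rw [Polynomial.degree_quadratic ha]; decide)
          refine ⟨t, by simpa [Polynomial.IsRoot] using ht⟩
        obtain ⟨s, hs⟩ : ∃ s : K, s = -(b u v + b v u) / b u u - t := ⟨_, rfl⟩
        have hs' : b u u * (s + t) = -(b u v + b v u) := by
          rw [hs]; field_simp; ring
        have hss : b u u * s ^ 2 + (b u v + b v u) * s + b v v = 0 := by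
          have e : b u v + b v u = - (b u u * (s + t)) := by rw [hs']; ring
          rw [e] at ht ⊢
          linear_combination ht
        have := h1 (t • u + v) (s • u + v)
          (by simp only [map_add, LinearMap.add_apply, map_smul, LinearMap.smul_apply, smul_eq_mul]
              linear_combination ht)
          (by simp only [map_add, LinearMap.add_apply, map_smul, LinearMap.smul_apply, smul_eq_mul]
              linear_combination hss)
        simp only [map_add, LinearMap.add_apply, map_smul, LinearMap.smul_apply, smul_eq_mul] at this
        apply hne
        have e : b u v + b v u = - (b u u * (s + t)) := by rw [hs']; ring
        have e2 : b v u = - (b u u * (s + t)) - b u v := by rw [← e]; ring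
        rw [e2] at this ht ⊢
        linear_combination (-b u u) * this - 2 * b u u * ht
    by_cases hq : ∀ x, b x x = 0
    · exact ⟨0, 0, fun x => by simp [hq]⟩
    · push Not at hq
      obtain ⟨e, he⟩ := hq
      by_cases h22 : (2 : K) = 0
      · have hB : ∀ u v, b u v + b v u = 0 := by
          intro u v
          have := h2 u v
          have h4 : (4 : K) = 0 := by linear_combination (2 : K) * h22
          rw [h4] at this
          simpa using this
        have hs : ∀ x, ∃ s : K, s ^ 2 = b x x := fun x => by
          obtain ⟨s, hs⟩ := IsAlgClosed.exists_pow_nat_eq (b x x) (n := 2) (by norm_num)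
          exact ⟨s, hs⟩
        choose l hl using hs
        have inj : ∀ a c : K, a ^ 2 = c ^ 2 → a = c := by
          intro a c hac
          have : (a - c) ^ 2 = 0 := by linear_combination hac + (c ^ 2 - a * c) * h22
          exact sub_eq_zero.mp (pow_eq_zero_iff (by norm_num) |>.mp this)
        let L : V →ₗ[K] K :=
          { toFun := l
            map_add' := fun x y => by
              apply inj
              rw [hl]
              simp only [map_add, LinearMap.add_apply]
              linear_combination hB x y - hl x - hl y - l x * l y * h22
            map_smul' := fun c x => by
              apply inj
              rw [hl]
              simp only [map_smul, LinearMap.smul_apply, smul_eq_mul, RingHom.id_apply]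
              linear_combination - c ^ 2 * hl x }
        exact ⟨L, L, fun x => by rw [← hl x, sq]; rfl⟩
      · refine ⟨b e + b.flip e, (4 * b e e)⁻¹ • (b e + b.flip e), fun x => ?_⟩
        have := h2 e x
        have h4 : (4 : K) ≠ 0 := by
          have : (4 : K) = 2 * 2 := by norm_num
          rw [this]; exact mul_ne_zero h22 h22
        simp only [LinearMap.add_apply, LinearMap.flip_apply, LinearMap.smul_apply, smul_eq_mul]
        field_simp
        linear_combination -this

end Aux14

section Aux14b

lemma homog_degree {σ K : Type*} [Field K] {p : MvPolynomial σ K} {n : ℕ}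
    (h : p.IsHomogeneous n) {m : σ →₀ ℕ} (hm : coeff m p ≠ 0) : m.degree = n := by
  rw [Finsupp.degree_eq_weight_one]
  exact h hm

lemma degree_succ_decomp {σ : Type*} {m : σ →₀ ℕ} {n : ℕ} (h : m.degree = n + 1) :
    ∃ i m', m = Finsupp.single i 1 + m' ∧ m'.degree = n := by
  obtain ⟨i, hi⟩ : ∃ i, m i ≠ 0 := by
    by_contra hcon
    push Not at hcon
    have : m = 0 := Finsupp.ext hcon
    simp [this] at h
  obtain ⟨m', rfl⟩ : ∃ m', m = Finsupp.single i 1 + m' :=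
    ⟨m - Finsupp.single i 1, (add_tsub_cancel_of_le (by
      rw [Finsupp.single_le_iff]; omega)).symm⟩
  refine ⟨i, m', rfl, ?_⟩
  rw [map_add, Finsupp.degree_single] at h
  omega

lemma degree_one_decomp {σ : Type*} {m : σ →₀ ℕ} (h : m.degree = 1) :
    ∃ i, m = Finsupp.single i 1 := by
  obtain ⟨i, m', rfl, h'⟩ := degree_succ_decomp h
  rw [Finsupp.degree_eq_zero_iff] at h'
  exact ⟨i, by simp [h']⟩

lemma order_le_totalDegree {σ K : Type*} [Field K] (p : MvPolynomial σ K) (hp : p ≠ 0) :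
    ∃ o : ℕ, (p : MvPowerSeries σ K).order = o ∧ o ≤ p.totalDegree ∧
      (p.totalDegree ≤ o → p.IsHomogeneous o) := by
  have hp' : (p : MvPowerSeries σ K) ≠ 0 := by
    intro h
    apply hp
    exact MvPolynomial.coe_injective σ K (by simpa using h)
  obtain ⟨m, hm⟩ := MvPolynomial.ne_zero_iff.mp hp
  have h1 : (p : MvPowerSeries σ K).order ≤ m.degree :=
    MvPowerSeries.order_le (by simpa using hm)
  have h2 : m.degree ≤ p.totalDegree := by
    have := MvPolynomial.le_totalDegree (MvPolynomial.mem_support_iff.mpr hm)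
    exact this
  obtain ⟨o, ho⟩ := ENat.ne_top_iff_exists.mp (ne_top_of_le_ne_top (ENat.natCast_ne_top _) h1)
  refine ⟨o, ho.symm, ?_, ?_⟩
  · rw [← ho] at h1
    have : o ≤ m.degree := by exact_mod_cast h1
    omega
  · intro hle
    intro n hn
    have h3 : n.degree ≤ p.totalDegree := by
      have := MvPolynomial.le_totalDegree (MvPolynomial.mem_support_iff.mpr hn)
      exact this
    have h4 : (p : MvPowerSeries σ K).order ≤ n.degree :=
      MvPowerSeries.order_le (by simpa using hn)
    rw [← ho] at h4
    have : o ≤ n.degree := by exact_mod_cast h4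
    have h5 : n.degree = o := by omega
    rw [← h5, Finsupp.degree_eq_weight_one]
    rfl

lemma homog_of_mul {σ K : Type*} [Field K] {d g : MvPolynomial σ K} {n : ℕ}
    (h : (d * g).IsHomogeneous n) (h0 : d * g ≠ 0) :
    ∃ i j, i + j = n ∧ d.IsHomogeneous i ∧ g.IsHomogeneous j := by
  have hd := left_ne_zero_of_mul h0
  have hg := right_ne_zero_of_mul h0
  obtain ⟨i, hi, hi', hi''⟩ := order_le_totalDegree d hd
  obtain ⟨j, hj, hj', hj''⟩ := order_le_totalDegree g hg
  obtain ⟨k, hk, hk', -⟩ := order_le_totalDegree _ h0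
  have h1 : d.totalDegree + g.totalDegree = n := by
    rw [← h.totalDegree h0, MvPolynomial.totalDegree_mul_of_isDomain hd hg]
  have h2 : i + j = k := by
    rw [MvPolynomial.coe_mul, MvPowerSeries.order_mul, hi, hj] at hk
    exact_mod_cast hk
  have h3 : n ≤ k := by
    have : (n : ℕ∞) ≤ k := by
      rw [← hk]
      apply MvPowerSeries.le_order
      intro m hm
      by_contra hne
      rw [MvPolynomial.coeff_coe] at hne
      have := homog_degree h hne
      rw [this] at hm
      exact lt_irrefl _ hm
    exact_mod_cast this
  exact ⟨i, j, by omega, hi'' (by omega), hj'' (by omega)⟩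

lemma lin_repr {σ K : Type*} [Field K] (L : MvPolynomial σ K) (hL : L.IsHomogeneous 1) :
    ∃ l : (σ → K) →ₗ[K] K, ∀ x, eval x L = l x := by
  have h : ∀ m : σ →₀ ℕ, ∃ l : (σ → K) →ₗ[K] K, ∀ x,
      coeff m L * m.prod (fun i k => x i ^ k) = l x := by
    intro m
    by_cases hm : coeff m L = 0
    · exact ⟨0, by simp [hm]⟩
    · have := homog_degree hL hm
      obtain ⟨i, rfl⟩ := degree_one_decomp this
      exact ⟨coeff (Finsupp.single i 1) L • LinearMap.proj i, fun x => by simp⟩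
  choose l hl using h
  refine ⟨∑ m ∈ L.support, l m, fun x => ?_⟩
  rw [MvPolynomial.eval_eq, LinearMap.sum_apply]
  exact Finset.sum_congr rfl (fun m _ => hl m x)

lemma quad_repr {σ K : Type*} [Field K] (Q : MvPolynomial σ K) (hQ : Q.IsHomogeneous 2) :
    ∃ b : (σ → K) →ₗ[K] (σ → K) →ₗ[K] K, ∀ x, eval x Q = b x x := by
  have h : ∀ m : σ →₀ ℕ, ∃ l : (σ → K) →ₗ[K] (σ → K) →ₗ[K] K, ∀ x,
      coeff m Q * m.prod (fun i k => x i ^ k) = l x x := by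
    intro m
    by_cases hm : coeff m Q = 0
    · exact ⟨0, by simp [hm]⟩
    · have := homog_degree hQ hm
      obtain ⟨i, m', rfl, h1⟩ := degree_succ_decomp this
      obtain ⟨j, rfl⟩ := degree_one_decomp h1
      refine ⟨LinearMap.mk₂ K (fun x y => coeff (Finsupp.single i 1 + Finsupp.single j 1) Q *
        (x i * y j)) ?_ ?_ ?_ ?_, fun x => ?_⟩
      · intros; simp; ring
      · intros; simp; ring
      · intros; simp; ring
      · intros; simp; ring
      · rw [Finsupp.prod_add_index' (by simp) (by intros; ring)]
        simp
  choose l hl using h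
  refine ⟨∑ m ∈ Q.support, l m, fun x => ?_⟩
  rw [MvPolynomial.eval_eq, LinearMap.sum_apply, LinearMap.sum_apply]
  exact Finset.sum_congr rfl (fun m _ => hl m x)

/-- The half-discriminant of a quadratic polynomial restricted to the span of three vectors. -/
def hdQ {σ K : Type*} [Field K] (u v w : σ → K) (Q : MvPolynomial σ K) : K :=
  halfDisc (eval u Q) (eval v Q) (eval w Q) (eval (v + w) Q - eval v Q - eval w Q)
    (eval (u + w) Q - eval u Q - eval w Q) (eval (u + v) Q - eval u Q - eval v Q)

lemma hdQ_of_dvd {σ K : Type*} [Field K] {Q L : MvPolynomial σ K}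
    (hQ : Q.IsHomogeneous 2) (hL : L.IsHomogeneous 1) (h : L ∣ Q) (u v w : σ → K) :
    hdQ u v w Q = 0 := by
  by_cases hQ0 : Q = 0
  · simp [hQ0, hdQ, halfDisc]
  · obtain ⟨G, rfl⟩ := h
    obtain ⟨i, j, hij, hi, hj⟩ := homog_of_mul hQ hQ0
    have : i = 1 := hi.inj_right hL (left_ne_zero_of_mul hQ0)
    obtain rfl : j = 1 := by omega
    obtain ⟨l, hl⟩ := lin_repr L hL
    obtain ⟨m, hm⟩ := lin_repr G hj
    simp only [hdQ, halfDisc, map_mul, hl, hm, map_add]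
    ring

lemma lin_poly {n : ℕ} {K : Type*} [Field K] (l : (Fin n → K) →ₗ[K] K) :
    ∃ L : MvPolynomial (Fin n) K, L.IsHomogeneous 1 ∧ ∀ x, eval x L = l x := by
  refine ⟨∑ i, C (l (Pi.single i 1)) * X i, ?_, fun x => ?_⟩
  · exact MvPolynomial.IsHomogeneous.sum _ _ _ (fun i _ => isHomogeneous_C_mul_X _ _)
  · rw [LinearMap.pi_apply_eq_sum_univ l x]
    rw [map_sum]
    refine Finset.sum_congr rfl (fun i _ => ?_)
    have : (Pi.single i 1 : Fin n → K) = fun j => if i = j then 1 else 0 := by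
      funext j; simp [Pi.single_apply, eq_comm]
    rw [this]
    simp [mul_comm]

lemma dvd_of_hdQ {n : ℕ} {K : Type*} [Field K] [IsAlgClosed K] {Q : MvPolynomial (Fin (n + 1)) K}
    (hQ : Q.IsHomogeneous 2) (h : ∀ u v w, hdQ u v w Q = 0) :
    ∃ L : MvPolynomial (Fin (n + 1)) K, L.IsHomogeneous 1 ∧ L ≠ 0 ∧ L ∣ Q := by
  by_cases hQ0 : Q = 0
  · exact ⟨X 0, isHomogeneous_X _ _, X_ne_zero _, by simp [hQ0]⟩
  obtain ⟨b, hb⟩ := quad_repr Q hQ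
  obtain ⟨l, m, hlm⟩ := quad_classify b (by
    intro u v w
    have := h u v w
    simp only [hdQ, hb, map_add, LinearMap.add_apply] at this
    rw [← this]
    congr 1 <;> ring)
  obtain ⟨L, hL, hL'⟩ := lin_poly l
  obtain ⟨G, hG, hG'⟩ := lin_poly m
  have : Q = L * G := by
    apply MvPolynomial.funext
    intro x
    rw [hb, hlm, map_mul, hL', hG']
  refine ⟨L, hL, ?_, Dvd.intro _ this.symm⟩
  rintro rfl
  simp at this
  exact hQ0 this

end Aux14b

section Aux14c

lemma origin_height {K : Type*} [Field K] (n : ℕ) :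
    ∃ p : Ideal (MvPolynomial (Fin n) K), p.IsPrime ∧ (n : ℕ∞) ≤ p.height ∧
      ∀ f, eval 0 f = 0 → f ∈ p := by
  let φ : ℕ → (MvPolynomial (Fin n) K →ₐ[K] MvPolynomial (Fin n) K) := fun i =>
    aeval (fun j : Fin n => if (j : ℕ) < i then 0 else X j)
  have hp : ∀ i, (RingHom.ker (φ i)).IsPrime := fun i => RingHom.ker_isPrime _
  have hle : ∀ i, RingHom.ker (φ i) ≤ RingHom.ker (φ (i + 1)) := by
    intro i f hf
    have : φ (i + 1) = (φ (i + 1)).comp (φ i) := by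
      apply MvPolynomial.algHom_ext
      intro j
      simp only [φ, aeval_X, AlgHom.comp_apply]
      split_ifs with h1 h2 <;> simp
      all_goals omega
    rw [RingHom.mem_ker] at hf ⊢
    rw [this, AlgHom.comp_apply, hf, map_zero]
  have hh : ∀ i ≤ n, (i : ℕ∞) ≤ (RingHom.ker (φ i)).height := by
    intro i
    induction i with
    | zero => simp
    | succ i ih =>
      intro hi
      have hlt : RingHom.ker (φ i) < RingHom.ker (φ (i + 1)) := by
        refine lt_of_le_not_ge (hle i) (fun hcon => ?_)
        have h1 : (X ⟨i, by omega⟩ : MvPolynomial (Fin n) K) ∈ RingHom.ker (φ (i + 1)) := by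
          simp [RingHom.mem_ker, φ]
        have h2 := hcon h1
        simp [RingHom.mem_ker, φ] at h2
      have := Ideal.height_add_one_le_of_lt_of_isPrime hlt
      refine le_trans ?_ this
      push_cast
      gcongr
      exact ih (by omega)
  refine ⟨RingHom.ker (φ n), hp n, hh n le_rfl, fun f hf => ?_⟩
  rw [RingHom.mem_ker]
  have : φ n = (Algebra.ofId K _).comp (aeval (0 : Fin n → K)) := by
    apply MvPolynomial.algHom_ext
    intro j
    simp [φ]
  rw [this, AlgHom.comp_apply, MvPolynomial.aeval_eq_eval, hf, map_zero]

lemma dim_mvPoly {K : Type*} [Field K] (n : ℕ) :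
    ringKrullDim (MvPolynomial (Fin n) K) = n := by
  rw [MvPolynomial.ringKrullDim_of_isNoetherianRing]
  simp

lemma dim_ge {K : Type*} [Field K] (r : ℕ) (Q F G : MvPolynomial (Fin (r + 1)) K)
    (hQ : eval 0 Q = 0) (hF : Q ∣ F) (hG : Q ∣ G) :
    (r : WithBot ℕ∞) ≤
      ringKrullDim (MvPolynomial (Fin (r + 1)) K ⧸ Ideal.span (Set.range ![F, G])) := by
  have hle : Ideal.span (Set.range ![F, G]) ≤ Ideal.span {Q} := by
    rw [Ideal.span_le]
    rintro _ ⟨i, rfl⟩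
    fin_cases i
    · exact Ideal.mem_span_singleton.mpr hF
    · exact Ideal.mem_span_singleton.mpr hG
  have h1 := ringKrullDim_le_of_surjective (Ideal.Quotient.factor hle)
    (Ideal.Quotient.factor_surjective hle)
  refine le_trans ?_ h1
  obtain ⟨p, hp, hh, hm⟩ := origin_height (K := K) (r + 1)
  have h2 := Ideal.height_le_ringKrullDim_quotient_add_one (hm Q hQ)
  have h3 : ((r + 1 : ℕ) : WithBot ℕ∞) ≤
      ringKrullDim (MvPolynomial (Fin (r + 1)) K ⧸ Ideal.span {Q}) + 1 :=
    le_trans (by exact_mod_cast hh) h2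
  generalize ringKrullDim (MvPolynomial (Fin (r + 1)) K ⧸ Ideal.span {Q}) = d at h3
  induction d with
  | bot => simp at h3
  | coe d =>
    induction d with
    | top => exact le_top
    | coe d =>
      norm_cast at h3 ⊢
      omega

lemma common_factor_of_dim {K : Type*} [Field K] (r : ℕ) (F G : MvPolynomial (Fin (r + 1)) K)
    (hF : F ≠ 0)
    (h : (r : WithBot ℕ∞) ≤
      ringKrullDim (MvPolynomial (Fin (r + 1)) K ⧸ Ideal.span (Set.range ![F, G]))) :
    ∃ f, ¬ IsUnit f ∧ f ∣ F ∧ f ∣ G := by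
  rw [ringKrullDim_quotient, Order.le_krullDim_iff] at h
  obtain ⟨l, hl⟩ := h
  have hmem : Ideal.span (Set.range ![F, G]) ≤ l.head.1.asIdeal := l.head.2
  have hFm : F ∈ l.head.1.asIdeal := hmem (Ideal.subset_span ⟨0, rfl⟩)
  have hGm : G ∈ l.head.1.asIdeal := hmem (Ideal.subset_span ⟨1, rfl⟩)
  have hne : l.head.1.asIdeal ≠ ⊥ := by
    intro h0; rw [h0] at hFm; exact hF hFm
  obtain ⟨f, hf, hfp⟩ := l.head.1.2.exists_mem_prime_of_ne_bot hne
  have hfle : Ideal.span {f} ≤ l.head.1.asIdeal := (Ideal.span_singleton_le_iff_mem _).mpr hf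
  have hge : l.head.1.asIdeal ≤ Ideal.span {f} := by
    by_contra hcon
    let q : PrimeSpectrum (MvPolynomial (Fin (r + 1)) K) :=
      ⟨Ideal.span {f}, (Ideal.span_singleton_prime hfp.ne_zero).mpr hfp⟩
    let z : PrimeSpectrum (MvPolynomial (Fin (r + 1)) K) := ⟨⊥, Ideal.isPrime_bot⟩
    have h1 : q < l.head.1 := lt_of_le_not_ge hfle hcon
    have h2 : z < q := by
      refine lt_of_le_not_ge (bot_le : (⊥ : Ideal _) ≤ _) (fun hc => ?_)
      have : f ∈ (⊥ : Ideal (MvPolynomial (Fin (r + 1)) K)) :=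
        hc (Ideal.mem_span_singleton_self f)
      exact hfp.ne_zero this
    let s : LTSeries _ := ((l.map Subtype.val (fun _ _ ↦ id)).cons q h1).cons z h2
    have hs : s.length = r + 2 := 
      (RelSeries.cons_length _ _ _).trans (congrArg (· + 1)
        ((RelSeries.cons_length _ _ _).trans (congrArg (· + 1) hl)))
    have h3 := Order.le_krullDim_iff.mpr ⟨s, hs⟩
    have h4 := dim_mvPoly (K := K) (r + 1)
    rw [ringKrullDim] at h4
    rw [h4] at h3
    have : r + 2 ≤ r + 1 := by exact_mod_cast h3
    omega
  exact ⟨f, hfp.not_isUnit, Ideal.mem_span_singleton.mp (hge hFm),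
    Ideal.mem_span_singleton.mp (hge hGm)⟩

end Aux14c

section Aux14d

lemma isClosed_dep {K : Type*} [Field K] {M P : Type*} [AddCommGroup M] [Module K M]
    [AddCommGroup P] [Module K P] {ι : Type*} [Fintype ι] [DecidableEq ι] (v : ι → M →ₗ[K] P) :
    @IsClosed M (zariskiTopology K M) {x | ¬ LinearIndependent K (fun i => v i x)} := by
  let A : (ι → P →ₗ[K] K) → Matrix ι ι (regFun K M) := fun φ i j =>
    ⟨fun x => φ j (v i x), regFun_linear ((φ j).comp (v i))⟩
  have hA : ∀ φ x, ((A φ).det : M → K) x = (Matrix.of fun i j => φ j (v i x)).det := by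
    intro φ x
    have := RingHom.map_det ((Pi.evalRingHom (fun _ : M => K) x).comp
      (regFun K M).subtype) (A φ)
    exact this
  convert! isClosed_regFun (fun φ => ((A φ).det : M → K)) (fun φ => (A φ).det.2) using 1
  ext x
  simp only [Set.mem_ofPred_eq, hA]
  constructor
  · intro h φ
    by_contra hdet
    apply h
    rw [Fintype.linearIndependent_iff]
    intro g hg
    have : Matrix.vecMul g (Matrix.of fun i j => φ j (v i x)) = 0 := by
      funext j
      have := congrArg (φ j) hg
      simpa [Matrix.vecMul, dotProduct] using this
    exact fun i => congrFun (Matrix.eq_zero_of_vecMul_eq_zero hdet this) i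
  · intro h hli
    obtain ⟨g, hg⟩ := LinearMap.exists_leftInverse_of_injective
      (Finsupp.linearCombination K (fun i => v i x)) (LinearMap.ker_eq_bot.mpr hli)
    have := h (fun j => (Finsupp.lapply j).comp g)
    have h1 : (Matrix.of fun i j => ((Finsupp.lapply j).comp g) (v i x)) = (1 : Matrix ι ι K) := by
      ext i j
      have h2 := LinearMap.congr_fun hg (Finsupp.single i 1)
      simp at h2
      simp [h2, Finsupp.single_apply, Matrix.one_apply]
    rw [h1] at this
    simp at this

lemma dep_param {K : Type*} [Field K] {V : Type*} [AddCommGroup V] [Module K V] {F G : V}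
    (h : ¬ LinearIndependent K ![F, G]) :
    (∃ a : K, F = a • G) ∨ (∃ a : K, G = a • F) := by
  rw [LinearIndependent.pair_iff] at h
  push Not at h
  obtain ⟨s, t, h1, h2⟩ := h
  by_cases hs : s = 0
  · right
    have ht := h2 hs
    refine ⟨0, ?_⟩
    rw [hs, zero_smul, zero_add] at h1
    simpa using (smul_eq_zero.mp h1).resolve_left ht
  · left
    refine ⟨-(s⁻¹ * t), ?_⟩
    rw [neg_smul, mul_smul, ← smul_neg, ← eq_neg_of_add_eq_zero_left h1, smul_smul,
      inv_mul_cancel₀ hs, one_smul]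

lemma dep_of_param {K : Type*} [Field K] {V : Type*} [AddCommGroup V] [Module K V] {F G : V}
    (Q : V) (a b : K) (hF : F = a • Q) (hG : G = b • Q) : ¬ LinearIndependent K ![F, G] := by
  rw [LinearIndependent.pair_iff]
  intro h
  by_cases hab : a = 0 ∧ b = 0
  · have := h 1 0 (by simp [hF, hab.1])
    simp at this
  · have := h b (-a) (by rw [hF, hG, smul_smul, smul_smul, ← add_smul]; simp [mul_comm])
    exact hab ⟨by simpa using this.2, this.1⟩

/-- Common linear factor. -/
def CLF {K : Type*} [Field K] {r : ℕ} (F G : MvPolynomial (Fin (r + 1)) K) : Prop :=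
  ∃ L : MvPolynomial (Fin (r + 1)) K, L.IsHomogeneous 1 ∧ L ≠ 0 ∧ L ∣ F ∧ L ∣ G

lemma homog_zero_C {σ K : Type*} [Field K] {p : MvPolynomial σ K} (h : p.IsHomogeneous 0) :
    ∃ c, p = C c := by
  rw [← totalDegree_zero_iff_isHomogeneous] at h
  exact ⟨_, totalDegree_eq_zero_iff_eq_C.mp h⟩

lemma clf_or_dep_of_factor {K : Type*} [Field K] {r : ℕ} {F G d : MvPolynomial (Fin (r + 1)) K}
    (hF : F.IsHomogeneous 2) (hG : G.IsHomogeneous 2) (hF0 : F ≠ 0)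
    (hd : ¬ IsUnit d) (hdF : d ∣ F) (hdG : d ∣ G) :
    CLF F G ∨ ¬ LinearIndependent K ![F, G] := by
  obtain ⟨g, hg⟩ := hdF
  have hdg0 : d * g ≠ 0 := hg ▸ hF0
  obtain ⟨i, j, hij, hi, hj⟩ := homog_of_mul (hg ▸ hF) hdg0
  have hd0 := left_ne_zero_of_mul hdg0
  have hi0 : i ≠ 0 := by
    rintro rfl
    obtain ⟨c, rfl⟩ := homog_zero_C hi
    apply hd
    have hc : c ≠ 0 := by rintro rfl; simp at hd0
    exact (IsUnit.mk0 c hc).map C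
  by_cases h1 : i = 1
  · subst h1
    exact Or.inl ⟨d, hi, hd0, Dvd.intro _ hg.symm, hdG⟩
  · right
    have : i = 2 := by omega
    subst this
    obtain rfl : j = 0 := by omega
    obtain ⟨a, rfl⟩ := homog_zero_C hj
    by_cases hG0 : G = 0
    · exact dep_of_param F 1 0 (by simp) (by simp [hG0])
    · obtain ⟨g', hg'⟩ := hdG
      obtain ⟨i', j', hij', hi', hj'⟩ := homog_of_mul (hg' ▸ hG) (hg' ▸ hG0)
      have : i' = 2 := hi'.inj_right hi hd0
      obtain rfl : j' = 0 := by omega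
      obtain ⟨b, rfl⟩ := homog_zero_C hj'
      exact dep_of_param d a b (by rw [hg, smul_eq_C_mul, mul_comm])
        (by rw [hg', smul_eq_C_mul, mul_comm])

lemma eval_zero_homog {σ K : Type*} [Field K] {p : MvPolynomial σ K} {n : ℕ}
    (h : p.IsHomogeneous n) (hn : n ≠ 0) : eval 0 p = 0 := by
  rw [MvPolynomial.eval_zero, MvPolynomial.constantCoeff_eq]
  by_contra hc
  have := homog_degree h hc
  simp at this
  exact hn this.symm

lemma vdim_iff {K : Type*} [Field K] {r : ℕ} (hr : 2 ≤ r) {F G : MvPolynomial (Fin (r + 1)) K}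
    (hF : F.IsHomogeneous 2) (hG : G.IsHomogeneous 2) :
    vdimGE r 2 ![F, G] ((r : ℤ) - 1) ↔ CLF F G ∨ ¬ LinearIndependent K ![F, G] := by
  have e : ((r : ℤ) - 1).toNat + 1 = r := by omega
  unfold vdimGE
  rw [e]
  constructor
  · intro h
    by_cases hF0 : F = 0
    · exact Or.inr (dep_of_param G 0 1 (by simp [hF0]) (by simp))
    · obtain ⟨f, hf, h1, h2⟩ := common_factor_of_dim r F G hF0 h
      exact clf_or_dep_of_factor hF hG hF0 hf h1 h2
  · rintro (⟨L, hL, -, h1, h2⟩ | h)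
    · exact dim_ge r L F G (eval_zero_homog hL (by norm_num)) h1 h2
    · rcases dep_param h with ⟨a, ha⟩ | ⟨a, ha⟩
      · exact dim_ge r G F G (eval_zero_homog hG (by norm_num))
          (by rw [ha, smul_eq_C_mul]; exact dvd_mul_left _ _) dvd_rfl
      · exact dim_ge r F F G (eval_zero_homog hF (by norm_num)) dvd_rfl
          (by rw [ha, smul_eq_C_mul]; exact dvd_mul_left _ _)

lemma lin_form {n : ℕ} {K : Type*} [Field K] [Infinite K] {L : MvPolynomial (Fin n) K}
    (hL : L.IsHomogeneous 1) : ∃ a : Fin n → K, L = ∑ i, C (a i) * X i := by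
  obtain ⟨l, hl⟩ := lin_repr L hL
  refine ⟨fun i => l (fun j => if i = j then 1 else 0), MvPolynomial.funext (fun x => ?_)⟩
  rw [hl, LinearMap.pi_apply_eq_sum_univ l x]
  simp [mul_comm]

lemma quot_homog {K : Type*} [Field K] {σ : Type*} {L F : MvPolynomial σ K}
    (hF : F.IsHomogeneous 2) (hL : L.IsHomogeneous 1) (h : L ∣ F) :
    ∃ g, g.IsHomogeneous 1 ∧ F = L * g := by
  by_cases hF0 : F = 0
  · exact ⟨0, isHomogeneous_zero _ _ _, by simp [hF0]⟩
  · obtain ⟨g, rfl⟩ := h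
    obtain ⟨i, j, hij, hi, hj⟩ := homog_of_mul hF hF0
    have : i = 1 := hi.inj_right hL (left_ne_zero_of_mul hF0)
    obtain rfl : j = 1 := by omega
    exact ⟨g, hj, rfl⟩

lemma syz_iff {K : Type*} [Field K] [Infinite K] {r : ℕ} {F G : MvPolynomial (Fin (r + 1)) K}
    (hF : F.IsHomogeneous 2) (hG : G.IsHomogeneous 2) :
    (∃ L M : MvPolynomial (Fin (r + 1)) K, L.IsHomogeneous 1 ∧ M.IsHomogeneous 1 ∧
      (L ≠ 0 ∨ M ≠ 0) ∧ L * F + M * G = 0) ↔ CLF F G ∨ ¬ LinearIndependent K ![F, G] := by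
  constructor
  · rintro ⟨L, M, hL, hM, hne, h⟩
    by_cases hF0 : F = 0
    · exact Or.inr (dep_of_param G 0 1 (by simp [hF0]) (by simp))
    by_cases hG0 : G = 0
    · exact Or.inr (dep_of_param F 1 0 (by simp) (by simp [hG0]))
    by_cases hrp : IsRelPrime F G
    · exfalso
      have hd : F ∣ M * G := ⟨-L, by linear_combination h⟩
      have hd' : F ∣ M := hrp.dvd_of_dvd_mul_right hd
      have hM0 : M = 0 := by
        by_contra hM0
        obtain ⟨c, hc⟩ := hd'
        have hc0 : F * c ≠ 0 := hc ▸ hM0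
        have := MvPolynomial.totalDegree_mul_of_isDomain hF0 (right_ne_zero_of_mul hc0)
        rw [← hc, hM.totalDegree hM0, hF.totalDegree hF0] at this
        omega
      rw [hM0] at h hne
      simp [hF0] at h
      simp [h] at hne
    · unfold IsRelPrime at hrp
      push Not at hrp
      obtain ⟨d, h1, h2, h3⟩ := hrp
      exact clf_or_dep_of_factor hF hG hF0 h3 h1 h2
  · rintro (⟨L, hL, hL0, h1, h2⟩ | h)
    · obtain ⟨g, hg, rfl⟩ := quot_homog hF hL h1
      obtain ⟨g', hg', rfl⟩ := quot_homog hG hL h2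
      by_cases h0 : g = 0 ∧ g' = 0
      · exact ⟨X 0, 0, isHomogeneous_X _ _, isHomogeneous_zero _ _ _, Or.inl (X_ne_zero _),
          by simp [h0.1]⟩
      · refine ⟨g', -g, hg', hg.neg, ?_, by ring⟩
        by_contra hcon
        push Not at hcon
        exact h0 ⟨by simpa using hcon.2, hcon.1⟩
    · rcases dep_param h with ⟨a, ha⟩ | ⟨a, ha⟩
      · refine ⟨X 0, -(C a * X 0), isHomogeneous_X _ _, (isHomogeneous_C_mul_X _ _).neg,
          Or.inl (X_ne_zero _), ?_⟩
        rw [ha, smul_eq_C_mul]; ring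
      · refine ⟨-(C a * X 0), X 0, (isHomogeneous_C_mul_X _ _).neg, isHomogeneous_X _ _,
          Or.inr (X_ne_zero _), ?_⟩
        rw [ha, smul_eq_C_mul]; ring

lemma syz_iff_dep {K : Type*} [Field K] [Infinite K] {r : ℕ} (F G : MvPolynomial (Fin (r + 1)) K) :
    ¬ LinearIndependent K (Sum.elim (fun i : Fin (r + 1) => X i * F) (fun i => X i * G)) ↔
    (∃ L M : MvPolynomial (Fin (r + 1)) K, L.IsHomogeneous 1 ∧ M.IsHomogeneous 1 ∧
      (L ≠ 0 ∨ M ≠ 0) ∧ L * F + M * G = 0) := by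
  have key : ∀ (a : Fin (r + 1) → K) (H : MvPolynomial (Fin (r + 1)) K),
      ∑ i, a i • (X i * H) = (∑ i, C (a i) * X i) * H := by
    intro a H
    rw [Finset.sum_mul]
    exact Finset.sum_congr rfl (fun i _ => by rw [smul_eq_C_mul]; ring)
  have hom : ∀ (a : Fin (r + 1) → K), (∑ i, C (a i) * X i : MvPolynomial (Fin (r + 1)) K).IsHomogeneous 1 :=
    fun a => MvPolynomial.IsHomogeneous.sum _ _ _ (fun i _ => isHomogeneous_C_mul_X _ _)
  have ne : ∀ (a : Fin (r + 1) → K) (i), a i ≠ 0 →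
      (∑ i, C (a i) * X i : MvPolynomial (Fin (r + 1)) K) ≠ 0 := by
    intro a i hi h0
    apply hi
    have := congrArg (eval (Pi.single i 1)) h0
    simpa [Pi.single_apply] using this
  rw [Fintype.not_linearIndependent_iff]
  constructor
  · rintro ⟨g, hg, i, hi⟩
    rw [Fintype.sum_sum_type] at hg
    simp only [Sum.elim_inl, Sum.elim_inr] at hg
    rw [key (fun i => g (Sum.inl i)), key (fun i => g (Sum.inr i))] at hg
    refine ⟨_, _, hom _, hom _, ?_, hg⟩
    rcases i with i | i
    · exact Or.inl (ne _ i hi)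
    · exact Or.inr (ne _ i hi)
  · rintro ⟨L, M, hL, hM, hne, h⟩
    obtain ⟨a, rfl⟩ := lin_form hL
    obtain ⟨b, rfl⟩ := lin_form hM
    refine ⟨Sum.elim a b, ?_, ?_⟩
    · rw [Fintype.sum_sum_type]
      simp only [Sum.elim_inl, Sum.elim_inr]
      rw [key, key, h]
    · by_contra hcon
      push Not at hcon
      have ha : ∀ i, a i = 0 := fun i => hcon (Sum.inl i)
      have hb : ∀ i, b i = 0 := fun i => hcon (Sum.inr i)
      simp [ha, hb] at hne

end Aux14d

section Aux14e

lemma isPreirreducible_of_quad {K : Type*} [Field K] [Infinite K]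
    {M : Type*} [AddCommGroup M] [Module K M] (S : Set M)
    (h : ∀ x ∈ S, ∀ y ∈ S, ∃ c : M, ∀ t : K,
      (1 - t) ^ 2 • x + (t * (1 - t)) • c + t ^ 2 • y ∈ S) :
    @IsPreirreducible M (zariskiTopology K M) S := by
  apply isPreirreducible_of_curves
  intro x hx y hy
  obtain ⟨c, hc⟩ := h x hx y hy
  refine ⟨_, ?_, ?_, hc, ?_⟩
  · simp
  · simp
  · intro φ
    refine ⟨(1 - Polynomial.X) ^ 2 * Polynomial.C (φ x) +
      Polynomial.X * (1 - Polynomial.X) * Polynomial.C (φ c) +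
      Polynomial.X ^ 2 * Polynomial.C (φ y), fun t => ?_⟩
    simp
    ring

variable {K : Type*} [Field K] {r : ℕ}

lemma isClosed_B : IsClosed {F : pairSpace K r | ¬ LinearIndependent K
      ![(F.1 : MvPolynomial (Fin (r + 1)) K), (F.2 : MvPolynomial (Fin (r + 1)) K)]} := by
  have := isClosed_dep (K := K) (M := pairSpace K r) (P := MvPolynomial (Fin (r + 1)) K)
    ![(Submodule.subtype _).comp (LinearMap.fst K _ _),
      (Submodule.subtype _).comp (LinearMap.snd K _ _)]
  convert! this using 1
  ext F
  simp only [Set.mem_ofPred_eq]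
  have e : ![(F.1 : MvPolynomial (Fin (r + 1)) K), (F.2 : MvPolynomial (Fin (r + 1)) K)] =
    fun i => (![(Submodule.subtype _).comp (LinearMap.fst K _ _),
      (Submodule.subtype _).comp (LinearMap.snd K _ _)] : Fin 2 → pairSpace K r →ₗ[K] _) i F := by
    funext i
    fin_cases i <;> rfl
  rw [e]

lemma isClosed_Z [Infinite K] : IsClosed {F : pairSpace K r |
    CLF (F.1 : MvPolynomial (Fin (r + 1)) K) F.2 ∨ ¬ LinearIndependent K
      ![(F.1 : MvPolynomial (Fin (r + 1)) K), (F.2 : MvPolynomial (Fin (r + 1)) K)]} := by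
  have := isClosed_dep (K := K) (M := pairSpace K r) (P := MvPolynomial (Fin (r + 1)) K)
    (Sum.elim
      (fun i : Fin (r + 1) => (LinearMap.mulLeft K (X i)).comp
        ((Submodule.subtype _).comp (LinearMap.fst K _ _)))
      (fun i : Fin (r + 1) => (LinearMap.mulLeft K (X i)).comp
        ((Submodule.subtype _).comp (LinearMap.snd K _ _))))
  convert! this using 1
  ext F
  simp only [Set.mem_ofPred_eq]
  rw [← syz_iff F.1.2 F.2.2, ← syz_iff_dep]
  have e : (Sum.elim (fun i : Fin (r + 1) => X i * (F.1 : MvPolynomial (Fin (r + 1)) K))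
      (fun i => X i * (F.2 : MvPolynomial (Fin (r + 1)) K))) =
    fun i => (Sum.elim
      (fun i : Fin (r + 1) => (LinearMap.mulLeft K (X i)).comp
        ((Submodule.subtype _).comp (LinearMap.fst K _ _)))
      (fun i : Fin (r + 1) => (LinearMap.mulLeft K (X i)).comp
        ((Submodule.subtype _).comp (LinearMap.snd K _ _))) :
        _ → pairSpace K r →ₗ[K] MvPolynomial (Fin (r + 1)) K) i F := by
    funext i
    rcases i with i | i <;> rfl
  rw [e]

lemma regFun_hdQ {M : Type*} [AddCommGroup M] [Module K M] {σ : Type*}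
    (p : M →ₗ[K] MvPolynomial σ K) (u v w : σ → K) : (fun x => hdQ u v w (p x)) ∈ regFun K M := by
  have ev : ∀ u : σ → K, (fun x => eval u (p x)) ∈ regFun K M := fun u =>
    regFun_linear ((MvPolynomial.aeval u).toLinearMap.comp p)
  have h4 : (fun _ : M => (4 : K)) ∈ regFun K M := (regFun K M).algebraMap_mem 4
  have hp : ∀ u v : σ → K, (fun x => eval (u + v) (p x) - eval u (p x) - eval v (p x)) ∈
    regFun K M := fun u v => sub_mem (sub_mem (ev _) (ev _)) (ev _)
  have t1 := mul_mem (mul_mem (mul_mem h4 (ev u)) (ev v)) (ev w)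
  have t2 := mul_mem (mul_mem (hp v w) (hp u w)) (hp u v)
  have t3 := mul_mem (ev u) (pow_mem (hp v w) 2)
  have t4 := mul_mem (ev v) (pow_mem (hp u w) 2)
  have t5 := mul_mem (ev w) (pow_mem (hp u v) 2)
  have t := sub_mem (sub_mem (sub_mem (add_mem t1 t2) t3) t4) t5
  convert! t using 1

lemma isClosed_red : IsClosed {F : pairSpace K r |
    ∀ q : ((Fin (r + 1) → K) × (Fin (r + 1) → K) × (Fin (r + 1) → K)) × Bool,
      hdQ q.1.1 q.1.2.1 q.1.2.2
        (if q.2 then (F.1 : MvPolynomial (Fin (r + 1)) K) else F.2) = 0} := by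
  have key := isClosed_regFun (K := K) (M := pairSpace K r)
    (ι := ((Fin (r + 1) → K) × (Fin (r + 1) → K) × (Fin (r + 1) → K)) × Bool)
    (fun q F => hdQ q.1.1 q.1.2.1 q.1.2.2
        (if q.2 then (F.1 : MvPolynomial (Fin (r + 1)) K) else F.2)) (by
    rintro ⟨⟨u, v, w⟩, b⟩
    cases b
    · have := regFun_hdQ ((Submodule.subtype _).comp (LinearMap.snd K _ _) :
        pairSpace K r →ₗ[K] MvPolynomial (Fin (r + 1)) K) u v w
      simpa using this
    · have := regFun_hdQ ((Submodule.subtype _).comp (LinearMap.fst K _ _) :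
        pairSpace K r →ₗ[K] MvPolynomial (Fin (r + 1)) K) u v w
      simpa using this)
  exact key

lemma clf_iff [IsAlgClosed K] (F : pairSpace K r) :
    CLF (F.1 : MvPolynomial (Fin (r + 1)) K) F.2 ↔
    (CLF (F.1 : MvPolynomial (Fin (r + 1)) K) F.2 ∨ ¬ LinearIndependent K
      ![(F.1 : MvPolynomial (Fin (r + 1)) K), (F.2 : MvPolynomial (Fin (r + 1)) K)]) ∧
    ∀ q : ((Fin (r + 1) → K) × (Fin (r + 1) → K) × (Fin (r + 1) → K)) × Bool,
      hdQ q.1.1 q.1.2.1 q.1.2.2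
        (if q.2 then (F.1 : MvPolynomial (Fin (r + 1)) K) else F.2) = 0 := by
  constructor
  · rintro ⟨L, hL, hL0, h1, h2⟩
    refine ⟨Or.inl ⟨L, hL, hL0, h1, h2⟩, ?_⟩
    rintro ⟨⟨u, v, w⟩, b⟩
    cases b
    · exact hdQ_of_dvd F.2.2 hL h2 u v w
    · exact hdQ_of_dvd F.1.2 hL h1 u v w
  · rintro ⟨h | h, hq⟩
    · exact h
    · rcases dep_param h with ⟨a, ha⟩ | ⟨a, ha⟩
      · obtain ⟨L, hL, hL0, hd⟩ := dvd_of_hdQ F.2.2 (fun u v w => hq ⟨⟨u, v, w⟩, false⟩)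
        refine ⟨L, hL, hL0, ?_, hd⟩
        rw [ha, smul_eq_C_mul]; exact hd.mul_left _
      · obtain ⟨L, hL, hL0, hd⟩ := dvd_of_hdQ F.1.2 (fun u v w => hq ⟨⟨u, v, w⟩, true⟩)
        refine ⟨L, hL, hL0, hd, ?_⟩
        rw [ha, smul_eq_C_mul]; exact hd.mul_left _

lemma irred_A [Infinite K] : IsIrreducible {F : pairSpace K r |
    CLF (F.1 : MvPolynomial (Fin (r + 1)) K) F.2} := by
  refine ⟨⟨0, X 0, isHomogeneous_X _ _, X_ne_zero _, by simp, by simp⟩, ?_⟩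
  apply isPreirreducible_of_quad (K := K)
  rintro ⟨⟨x₁, hx₁⟩, ⟨x₂, hx₂⟩⟩ ⟨L, hL, hL0, h1, h2⟩ ⟨⟨y₁, hy₁⟩, ⟨y₂, hy₂⟩⟩ ⟨L', hL', hL0', h1', h2'⟩
  obtain ⟨g₁, hg₁, rfl⟩ := quot_homog hx₁ hL h1
  obtain ⟨g₂, hg₂, rfl⟩ := quot_homog hx₂ hL h2
  obtain ⟨k₁, hk₁, rfl⟩ := quot_homog hy₁ hL' h1'
  obtain ⟨k₂, hk₂, rfl⟩ := quot_homog hy₂ hL' h2'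
  refine ⟨⟨⟨L * k₁ + L' * g₁, (hL.mul hk₁).add (hL'.mul hg₁)⟩,
    ⟨L * k₂ + L' * g₂, (hL.mul hk₂).add (hL'.mul hg₂)⟩⟩, fun t => ?_⟩
  have e : ∀ g k : MvPolynomial (Fin (r + 1)) K,
      (1 - t) ^ 2 • (L * g) + (t * (1 - t)) • (L * k + L' * g) + t ^ 2 • (L' * k) =
      (C (1 - t) * L + C t * L') * (C (1 - t) * g + C t * k) := by
    intro g k
    simp only [smul_eq_C_mul, map_pow, map_mul]
    ring
  by_cases h0 : C (1 - t) * L + C t * L' = 0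
  · refine ⟨X 0, isHomogeneous_X _ _, X_ne_zero _, ?_, ?_⟩
    · change _ ∣ (1 - t) ^ 2 • (L * g₁) + (t * (1 - t)) • (L * k₁ + L' * g₁) + t ^ 2 • (L' * k₁)
      rw [e, h0, zero_mul]; exact dvd_zero _
    · change _ ∣ (1 - t) ^ 2 • (L * g₂) + (t * (1 - t)) • (L * k₂ + L' * g₂) + t ^ 2 • (L' * k₂)
      rw [e, h0, zero_mul]; exact dvd_zero _
  · refine ⟨C (1 - t) * L + C t * L', (hL.C_mul _).add (hL'.C_mul _), h0, ?_, ?_⟩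
    · change _ ∣ (1 - t) ^ 2 • (L * g₁) + (t * (1 - t)) • (L * k₁ + L' * g₁) + t ^ 2 • (L' * k₁)
      rw [e]; exact dvd_mul_right _ _
    · change _ ∣ (1 - t) ^ 2 • (L * g₂) + (t * (1 - t)) • (L * k₂ + L' * g₂) + t ^ 2 • (L' * k₂)
      rw [e]; exact dvd_mul_right _ _

lemma dep_param' {K : Type*} [Field K] {V : Type*} [AddCommGroup V] [Module K V] {F G : V}
    (h : ¬ LinearIndependent K ![F, G]) (S : Submodule K V) (hF : F ∈ S) (hG : G ∈ S) :
    ∃ Q ∈ S, ∃ a b : K, F = a • Q ∧ G = b • Q := by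
  rcases dep_param h with ⟨a, ha⟩ | ⟨a, ha⟩
  · exact ⟨G, hG, a, 1, ha, by simp⟩
  · exact ⟨F, hF, 1, a, by simp, ha⟩

lemma irred_B [Infinite K] : IsIrreducible {F : pairSpace K r | ¬ LinearIndependent K
      ![(F.1 : MvPolynomial (Fin (r + 1)) K), (F.2 : MvPolynomial (Fin (r + 1)) K)]} := by
  refine ⟨⟨0, dep_of_param 0 0 0 (by simp) (by simp)⟩, ?_⟩
  apply isPreirreducible_of_quad (K := K)
  rintro ⟨⟨x₁, hx₁⟩, ⟨x₂, hx₂⟩⟩ hx ⟨⟨y₁, hy₁⟩, ⟨y₂, hy₂⟩⟩ hy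
  obtain ⟨Q, hQ, a, b, h1, h2⟩ := dep_param' hx _ hx₁ hx₂
  obtain ⟨Q', hQ', a', b', h1', h2'⟩ := dep_param' hy _ hy₁ hy₂
  simp only at h1 h2 h1' h2'
  subst h1 h2 h1' h2'
  refine ⟨⟨⟨a • Q' + a' • Q, add_mem (Submodule.smul_mem _ _ hQ') (Submodule.smul_mem _ _ hQ)⟩,
    ⟨b • Q' + b' • Q, add_mem (Submodule.smul_mem _ _ hQ') (Submodule.smul_mem _ _ hQ)⟩⟩,
    fun t => ?_⟩
  have e : ∀ a a' : K,
      (1 - t) ^ 2 • (a • Q) + (t * (1 - t)) • (a • Q' + a' • Q) + t ^ 2 • (a' • Q') =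
      ((1 - t) * a + t * a') • ((1 - t) • Q + t • Q') := by
    intro a a'
    simp only [smul_eq_C_mul, map_pow, map_mul, map_add]
    ring
  exact dep_of_param _ _ _ (e a a') (e b b')

lemma not_A_sub_B (hr : 2 ≤ r) : ¬ {F : pairSpace K r |
    CLF (F.1 : MvPolynomial (Fin (r + 1)) K) F.2} ⊆ {F : pairSpace K r | ¬ LinearIndependent K
      ![(F.1 : MvPolynomial (Fin (r + 1)) K), (F.2 : MvPolynomial (Fin (r + 1)) K)]} := by
  intro h
  have h01 : (0 : Fin (r + 1)) ≠ ⟨1, by omega⟩ := by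
    intro h; have := congrArg Fin.val h; simp at this
  generalize (⟨1, by omega⟩ : Fin (r + 1)) = i at h01
  have := @h ⟨⟨X 0 * X 0, (isHomogeneous_X _ _).mul (isHomogeneous_X _ _)⟩,
    ⟨X 0 * X i, (isHomogeneous_X _ _).mul (isHomogeneous_X _ _)⟩⟩
    ⟨X 0, isHomogeneous_X _ _, X_ne_zero _, dvd_mul_right _ _, dvd_mul_right _ _⟩
  apply this
  rw [LinearIndependent.pair_iff]
  intro s t hst
  have h1 := congrArg (eval (Pi.single 0 1)) hst
  have h2 := congrArg (eval (Pi.single 0 1 + Pi.single i 1)) hst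
  simp [Pi.single_apply, h01, h01.symm] at h1 h2
  subst h1
  simpa using h2

lemma not_B_sub_A (hr : 2 ≤ r) : ¬ {F : pairSpace K r | ¬ LinearIndependent K
      ![(F.1 : MvPolynomial (Fin (r + 1)) K), (F.2 : MvPolynomial (Fin (r + 1)) K)]} ⊆
    {F : pairSpace K r | CLF (F.1 : MvPolynomial (Fin (r + 1)) K) F.2} := by
  intro h
  have h01 : (0 : Fin (r + 1)) ≠ ⟨1, by omega⟩ := by
    intro h; have := congrArg Fin.val h; simp at this
  have h02 : (0 : Fin (r + 1)) ≠ ⟨2, by omega⟩ := by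
    intro h; have := congrArg Fin.val h; simp at this
  have h12 : (⟨1, by omega⟩ : Fin (r + 1)) ≠ ⟨2, by omega⟩ := by
    intro h; have := congrArg Fin.val h; simp at this
  generalize (⟨1, by omega⟩ : Fin (r + 1)) = i at h01 h12
  generalize (⟨2, by omega⟩ : Fin (r + 1)) = j at h02 h12
  have hQ : (X 0 * X i + X j * X j : MvPolynomial (Fin (r + 1)) K).IsHomogeneous 2 :=
    ((isHomogeneous_X _ _).mul (isHomogeneous_X _ _)).add
      ((isHomogeneous_X _ _).mul (isHomogeneous_X _ _))
  obtain ⟨L, hL, hL0, hd, -⟩ := @h ⟨⟨_, hQ⟩, ⟨_, hQ⟩⟩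
    (dep_of_param (X 0 * X i + X j * X j : MvPolynomial (Fin (r + 1)) K) 1 1 (by simp) (by simp))
  have := hdQ_of_dvd hQ hL hd (Pi.single 0 1) (Pi.single i 1) (Pi.single j 1)
  simp [hdQ, halfDisc, Pi.single_apply, h01, h01.symm, h02, h02.symm, h12, h12.symm] at this

end Aux14e

/-- Over an algebraically closed field and for `r ≥ 2`, the Zariski closed
set `Z = {(F₁, F₂) : dim V(F₁, F₂) ≥ r - 1}` of pairs of quadratic forms has exactly two
irreducible components (maximal irreducible subsets): the set `A` of pairs with a common
nonzero linear factor and the set `B` of linearly dependent pairs. -/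
theorem statement14 [IsAlgClosed K] (r : ℕ) (hr : 2 ≤ r)
    (A B Z : Set (pairSpace K r))
    (hA : A = {F | ∃ L : MvPolynomial (Fin (r + 1)) K, L.IsHomogeneous 1 ∧ L ≠ 0 ∧
      L ∣ (F.1 : MvPolynomial (Fin (r + 1)) K) ∧ L ∣ (F.2 : MvPolynomial (Fin (r + 1)) K)})
    (hB : B = {F | ¬ LinearIndependent K
      ![(F.1 : MvPolynomial (Fin (r + 1)) K), (F.2 : MvPolynomial (Fin (r + 1)) K)]})
    (hZ : Z = {F | vdimGE r 2
      ![(F.1 : MvPolynomial (Fin (r + 1)) K), (F.2 : MvPolynomial (Fin (r + 1)) K)]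
      ((r : ℤ) - 1)}) :
    IsClosed Z ∧
      {C | Maximal (fun t => t ⊆ Z ∧ IsIrreducible t) C} = {A, B} ∧ A ≠ B := by
  have hA' : A = {F | CLF (F.1 : MvPolynomial (Fin (r + 1)) K) F.2} := hA
  have hZ' : Z = A ∪ B := by
    rw [hA', hB, hZ]
    ext F
    exact vdim_iff hr F.1.2 F.2.2
  have hBc : IsClosed B := by rw [hB]; exact isClosed_B
  have hZc : IsClosed Z := by
    convert! isClosed_Z (K := K) (r := r) using 1
    rw [hZ', hA', hB]
    rfl
  have hAc : IsClosed A := by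
    convert! hZc.inter (isClosed_red (K := K) (r := r)) using 1
    rw [hZ', hA', hB]
    ext F
    exact clf_iff F
  have hAi : IsIrreducible A := by rw [hA']; exact irred_A
  have hBi : IsIrreducible B := by rw [hB]; exact irred_B
  have hAB : ¬ A ⊆ B := by
    rw [hA', hB]
    exact not_A_sub_B hr
  have hBA : ¬ B ⊆ A := by
    rw [hA', hB]
    exact not_B_sub_A hr
  have hsplit : ∀ t, t ⊆ Z → IsIrreducible t → t ⊆ A ∨ t ⊆ B := by
    intro t ht hti
    rw [hZ'] at ht
    exact isPreirreducible_iff_isClosed_union_isClosed.mp hti.2 A B hAc hBc ht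
  have hAZ : A ⊆ Z := hZ' ▸ Set.subset_union_left
  have hBZ : B ⊆ Z := hZ' ▸ Set.subset_union_right
  refine ⟨hZc, ?_, fun h => hAB h.subset⟩
  ext D
  simp only [Set.mem_ofPred_eq, Set.mem_insert_iff, Set.mem_singleton_iff]
  constructor
  · intro hD
    rcases hsplit D hD.1.1 hD.1.2 with h | h
    · exact Or.inl (Set.Subset.antisymm h (hD.2 ⟨hAZ, hAi⟩ h))
    · exact Or.inr (Set.Subset.antisymm h (hD.2 ⟨hBZ, hBi⟩ h))
  · rintro (rfl | rfl)
    · refine ⟨⟨hAZ, hAi⟩, fun t ht hle => ?_⟩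
      rcases hsplit t ht.1 ht.2 with h | h
      · exact h
      · exact absurd (Set.Subset.trans hle h) hAB
    · refine ⟨⟨hBZ, hBi⟩, fun t ht hle => ?_⟩
      rcases hsplit t ht.1 ht.2 with h | h
      · exact absurd (Set.Subset.trans hle h) hBA
      · exact h

end Statement14
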